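/- (Weighted integral inequality for the non-oscillatory boundary term of the Robin problem.) Let s ≥ 0 and let γ be a nonzero real number. There exists a constant C = C(s,γ) > 0 such that for every measurable function G : ℝ² → ℂ, ∫_{k₁∈ℝ} ∫_{k₂=0}^∞ (1+k₁²+k₂²)^s · (k₂²/(k₂²+γ²)) · |G(k₁, -k₁²+k₂²)|² dk₂ dk₁ ≤ C ( ∫_{k₁∈ℝ} (1+k₁²)^s ∫_{τ=-k₁²}^{∞} (1+(τ+k₁²)²)^{-1/4} |G(k₁,τ)|² dτ dk₁ + ∫_{k₁∈ℝ} ∫_{τ=-k₁²}^{∞} (1+(τ+k₁²)²)^{(2s-1)/4} |G(k₁,τ)|² dτ dk₁ ), where both sides are interpreted in [0,∞]. -/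

import Mathlib

open MeasureTheory Set
open scoped ENNReal NNReal

lemma robin_cov (a : ℝ) (g : ℝ → ℝ≥0∞) :
    ∫⁻ τ in Ioi (-a), g τ = ∫⁻ x in Ioi (0:ℝ), ENNReal.ofReal (|2 * x|) * g (-a + x^2) := by
  have him : (fun x : ℝ => -a + x^2) '' Ioi 0 = Ioi (-a) := by
    ext t
    simp only [mem_image, mem_Ioi]
    constructor
    · rintro ⟨x, hx, rfl⟩
      have : 0 < x^2 := by positivity
      linarith
    · intro ht
      refine ⟨Real.sqrt (t + a), Real.sqrt_pos.2 (by linarith), ?_⟩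
      rw [Real.sq_sqrt (by linarith)]
      ring
  rw [← him]
  refine lintegral_image_eq_lintegral_abs_deriv_mul measurableSet_Ioi (f' := fun x => 2 * x)
    ?_ ?_ g
  · intro x _
    have := ((hasDerivAt_pow 2 x).const_add (-a)).hasDerivWithinAt (s := Ioi 0)
    simpa using this
  · intro x hx y hy h
    simp only [mem_Ioi] at hx hy
    have h' : x^2 = y^2 := by simpa using h
    exact (pow_left_inj₀ hx.le hy.le two_ne_zero).1 h'

lemma robin_ptwise (s γ : ℝ) (hs : 0 ≤ s) (hγ : γ ≠ 0) (k x : ℝ) (hx : 0 < x) :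
    (1 + k^2 + x^2) ^ s * (x^2 / (x^2 + γ^2)) ≤
      (2 ^ s * (2 + 1 / γ^2)) *
        ((1 + k^2) ^ s * (|2 * x| * (1 + (-k^2 + x^2 + k^2)^2) ^ (-(1/4) : ℝ))
          + |2 * x| * (1 + (-k^2 + x^2 + k^2)^2) ^ ((2*s - 1)/4)) := by
  have e : -k^2 + x^2 + k^2 = x^2 := by ring
  rw [e, abs_of_pos (by positivity)]
  set B : ℝ := 1 + (x^2)^2 with hB
  have hB0 : 0 < B := by positivity
  have hsplit : B ^ ((2*s - 1)/4) = B ^ (s/2) * B ^ (-(1/4) : ℝ) := by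
    rw [← Real.rpow_add hB0]; congr 1; ring
  have hx2 : (x^2) ^ s ≤ B ^ (s/2) := by
    have : (x^2) ^ s = ((x^2)^2) ^ (s/2) := by
      rw [← Real.rpow_natCast (x^2) 2, ← Real.rpow_mul (by positivity)]
      congr 1; push_cast; ring
    rw [this]
    exact Real.rpow_le_rpow (by positivity) (by rw [hB]; linarith) (by positivity)
  have h1 : (1 + k^2 + x^2) ^ s ≤ 2 ^ s * ((1 + k^2) ^ s + B ^ (s/2)) := by
    have p1 : 0 ≤ (1 + k^2) ^ s := by positivity
    have p2 : 0 ≤ B ^ (s/2) := by positivity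
    rcases le_total (1 + k^2) (x^2) with h | h
    · calc (1 + k^2 + x^2) ^ s ≤ (2 * x^2) ^ s :=
            Real.rpow_le_rpow (by positivity) (by linarith) hs
        _ = 2 ^ s * (x^2) ^ s := Real.mul_rpow (by norm_num) (by positivity)
        _ ≤ _ := by gcongr; linarith
    · calc (1 + k^2 + x^2) ^ s ≤ (2 * (1 + k^2)) ^ s :=
            Real.rpow_le_rpow (by positivity) (by linarith) hs
        _ = 2 ^ s * (1 + k^2) ^ s := Real.mul_rpow (by norm_num) (by positivity)
        _ ≤ _ := by gcongr; linarith
  have hq : B ^ (1/4 : ℝ) ≤ 1 + x := by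
    have : B ≤ (1 + x)^4 := by rw [hB]; nlinarith [pow_pos hx 2, pow_pos hx 3]
    calc B ^ (1/4 : ℝ) ≤ ((1 + x)^4) ^ (1/4 : ℝ) :=
          Real.rpow_le_rpow hB0.le this (by norm_num)
      _ = 1 + x := by
          rw [← Real.rpow_natCast, ← Real.rpow_mul (by positivity)]; norm_num
  have hg : 0 < γ^2 := by positivity
  have h2 : x^2 / (x^2 + γ^2) ≤ (2 + 1 / γ^2) * (2 * x * B ^ (-(1/4) : ℝ)) := by
    rw [Real.rpow_neg hB0.le, div_le_iff₀ (by positivity)]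
    have hb : 0 < B ^ (1/4 : ℝ) := by positivity
    have key : x * B ^ (1/4 : ℝ) ≤ (2 + 1 / γ^2) * (x^2 + γ^2) := by
      have e2 : (2 + 1 / γ^2) * (x^2 + γ^2) = 2 * x^2 + 2 * γ^2 + x^2 / γ^2 + 1 := by
        field_simp
        ring
      have : 0 ≤ x^2 / γ^2 := by positivity
      rw [e2]
      nlinarith [mul_le_mul_of_nonneg_left hq hx.le, sq_nonneg (x - 1)]
    have key2 : x^2 ≤ ((2 + 1 / γ^2) * (x^2 + γ^2)) * x * (B ^ (1/4 : ℝ))⁻¹ := by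
      rw [← div_eq_mul_inv, le_div_iff₀ hb]
      nlinarith [mul_le_mul_of_nonneg_left key hx.le]
    have : 0 ≤ ((2 + 1 / γ^2) * (x^2 + γ^2)) * x * (B ^ (1/4 : ℝ))⁻¹ := by positivity
    nlinarith
  calc _ ≤ (2 ^ s * ((1 + k^2) ^ s + B ^ (s/2))) *
        ((2 + 1 / γ^2) * (2 * x * B ^ (-(1/4) : ℝ))) := by
        apply mul_le_mul h1 h2 <;> positivity
    _ = _ := by rw [hsplit]; ring

/-- Weighted integral inequality for the non-oscillatory boundary term of the Robin problem. -/
theorem robin_nonoscillatory_weighted_inequality (s γ : ℝ) (hs : 0 ≤ s) (hγ : γ ≠ 0) :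
    ∃ C : ℝ, 0 < C ∧ ∀ G : ℝ × ℝ → ℂ, Measurable G →
      (∫⁻ k₁ : ℝ, ∫⁻ k₂ in Ioi (0:ℝ),
          ENNReal.ofReal ((1 + k₁^2 + k₂^2) ^ s * (k₂^2 / (k₂^2 + γ^2)))
            * (‖G (k₁, -k₁^2 + k₂^2)‖₊ : ℝ≥0∞) ^ 2)
      ≤ ENNReal.ofReal C *
        ((∫⁻ k₁ : ℝ, ENNReal.ofReal ((1 + k₁^2) ^ s) *
            ∫⁻ τ in Ioi (-k₁^2),
              ENNReal.ofReal ((1 + (τ + k₁^2)^2) ^ (-(1/4) : ℝ))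
                * (‖G (k₁, τ)‖₊ : ℝ≥0∞) ^ 2)
         + (∫⁻ k₁ : ℝ, ∫⁻ τ in Ioi (-k₁^2),
              ENNReal.ofReal ((1 + (τ + k₁^2)^2) ^ ((2*s - 1)/4))
                * (‖G (k₁, τ)‖₊ : ℝ≥0∞) ^ 2)) := by
  refine ⟨2 ^ s * (2 + 1 / γ^2), by positivity, fun G hG => ?_⟩
  simp_rw [robin_cov]
  have m2 : Measurable (fun p : ℝ × ℝ => ENNReal.ofReal |2 * p.2| *
      (ENNReal.ofReal ((1 + (-p.1^2 + p.2^2 + p.1^2)^2) ^ ((2*s - 1)/4))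
        * (‖G (p.1, -p.1^2 + p.2^2)‖₊ : ℝ≥0∞) ^ 2)) := by fun_prop
  have m1 : Measurable (fun p : ℝ × ℝ => ENNReal.ofReal |2 * p.2| *
      (ENNReal.ofReal ((1 + (-p.1^2 + p.2^2 + p.1^2)^2) ^ (-(1/4) : ℝ))
        * (‖G (p.1, -p.1^2 + p.2^2)‖₊ : ℝ≥0∞) ^ 2)) := by fun_prop
  rw [← lintegral_add_right _ (Measurable.lintegral_prod_right' m2),
    ← lintegral_const_mul' _ _ ENNReal.ofReal_ne_top]
  refine lintegral_mono fun k => ?_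
  have m2k := m2.comp (measurable_prodMk_left (x := k))
  simp only [Function.comp_def] at m2k
  dsimp only
  rw [← lintegral_const_mul' _ _ ENNReal.ofReal_ne_top, ← lintegral_add_right _ m2k,
    ← lintegral_const_mul' _ _ ENNReal.ofReal_ne_top]
  refine setLIntegral_mono' measurableSet_Ioi fun x hx => ?_
  have h := ENNReal.ofReal_le_ofReal (robin_ptwise s γ hs hγ k x hx)
  refine (mul_le_mul_left h _).trans (le_of_eq ?_)
  rw [ENNReal.ofReal_mul (by positivity), ENNReal.ofReal_add (by positivity) (by positivity),
    ENNReal.ofReal_mul (p := (1 + k^2) ^ s) (by positivity), ENNReal.ofReal_mul (abs_nonneg _),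
    ENNReal.ofReal_mul (abs_nonneg _)]
  ring
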